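/- For every real number t with −1 < t ≤ 1, the quotient A_n(t)/B_n(t) converges to log(1+t) as n → ∞ (in particular B_n(t) ≠ 0 for all sufficiently large n). -/

import Mathlib

open Finset Filter

/-- `Bₙ(t) = ∑_{k=0}^n C(n,k) C(n+k,k) t^{n−k}`. -/
noncomputable def Blog (t : ℝ) (n : ℕ) : ℝ :=
  ∑ k ∈ range (n + 1), (Nat.choose n k : ℝ) * (Nat.choose (n + k) k : ℝ) * t ^ (n - k)

/-- `cₖ(t) = ∑_{m=1}^k (−1)^{m−1} t^m/m`. -/
noncomputable def clog (t : ℝ) (k : ℕ) : ℝ :=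
  ∑ m ∈ Icc 1 k, (-1 : ℝ) ^ (m - 1) * t ^ m / m

/-- `Aₙ(t) = ∑_{k=0}^n C(n,k) C(n+k,k) t^{n−k} cₖ(t)`. -/
noncomputable def Alog (t : ℝ) (n : ℕ) : ℝ :=
  ∑ k ∈ range (n + 1),
    (Nat.choose n k : ℝ) * (Nat.choose (n + k) k : ℝ) * t ^ (n - k) * clog t k

/-!
With `Pₙ(u) = ∑ₖ C(n,k) C(n+k,k) (-u)ᵏ` the shifted Legendre polynomial, integrating
`log (1 + t) - cₖ(t) = ∫₀¹ t (-tu)ᵏ / (1 + tu) du` against the weights defining `Aₙ` and `Bₙ` gives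
`Bₙ log (1 + t) - Aₙ = tⁿ⁺¹ ∫₀¹ Pₙ(u) / (1 + tu) du`. By Rodrigues' formula and `n` integrations by
parts this equals `t²ⁿ⁺¹ ∫₀¹ (u (1 - u))ⁿ / (1 + tu)ⁿ⁺¹ du`. Put `y = √(1 + t)`, so that
`t = (y - 1)(y + 1)`. Then `u (1 - u) / (1 + tu) ≤ (1 + y)⁻²`, which bounds the remainder by
`(y - 1)²ⁿ |log (1 + t)|`, while `Bₙ = ∑ₖ C(n,k)² y²ᵏ ≥ (1 + y)²ⁿ / (n + 1)` by Cauchy–Schwarz.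
Hence the error is at most `(n + 1) ((y - 1) / (y + 1))²ⁿ |log (1 + t)|`.
-/

section Binomial

lemma choose_mul_choose_sub {n k i : ℕ} (hk : k ≤ n) (hi : i ≤ n) :
    n.choose k * k.choose (n - i) = n.choose i * i.choose (n - k) := by
  rcases le_or_gt (n - i) k with h | h
  · rw [Nat.choose_mul h, Nat.choose_symm hi, Nat.sub_sub_self hi,
      ← Nat.choose_symm (show n - k ≤ i by lia)]
    congr 2
    lia
  · rw [Nat.choose_eq_zero_of_lt h, Nat.choose_eq_zero_of_lt (show i < n - k by lia), mul_zero,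
      mul_zero]

lemma sum_choose_sq_mul_choose_sub {n i : ℕ} (hi : i ≤ n) :
    ∑ k ∈ range (n + 1), n.choose k ^ 2 * k.choose (n - i) =
      n.choose i * (n + i).choose i := by
  calc ∑ k ∈ range (n + 1), n.choose k ^ 2 * k.choose (n - i)
      = ∑ k ∈ range (n + 1), n.choose i * (n.choose k * i.choose (n - k)) :=
        sum_congr rfl fun k hk => by
          linear_combination n.choose k * choose_mul_choose_sub (mem_range_succ_iff.mp hk) hi
    _ = n.choose i * (n + i).choose i := by
        rw [← mul_sum, ← Nat.choose_symm_add, Nat.add_choose_eq,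
          Nat.sum_antidiagonal_eq_sum_range_succ (fun p q => n.choose p * i.choose q)]

lemma one_add_pow_eq_sum_choose_sub {R : Type*} [CommSemiring R] (x : R) {n k : ℕ} (hk : k ≤ n) :
    (1 + x) ^ k = ∑ i ∈ range (n + 1), (k.choose (n - i) : R) * x ^ (n - i) := by
  calc (1 + x) ^ k
      = ∑ j ∈ range (k + 1), (k.choose j : R) * x ^ j := by
        rw [add_comm, add_pow]
        simp only [one_pow, mul_one, mul_comm]
    _ = ∑ j ∈ range (n + 1), (k.choose j : R) * x ^ j := by
        refine sum_subset (range_subset_range.mpr (by lia)) fun j _ hj => ?_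
        rw [Nat.choose_eq_zero_of_lt (by simpa using hj), Nat.cast_zero, zero_mul]
    _ = ∑ i ∈ range (n + 1), (k.choose (n - i) : R) * x ^ (n - i) :=
        (sum_range_reflect (fun j => (k.choose j : R) * x ^ j) (n + 1)).symm

lemma sum_choose_mul_add_choose_mul_pow {R : Type*} [CommSemiring R] (x : R) (n : ℕ) :
    ∑ k ∈ range (n + 1), (n.choose k : R) * ((n + k).choose k : R) * x ^ (n - k) =
      ∑ k ∈ range (n + 1), (n.choose k : R) ^ 2 * (1 + x) ^ k := by
  calc ∑ i ∈ range (n + 1), (n.choose i : R) * ((n + i).choose i : R) * x ^ (n - i)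
      = ∑ i ∈ range (n + 1), ∑ k ∈ range (n + 1),
          (n.choose k : R) ^ 2 * ((k.choose (n - i) : R) * x ^ (n - i)) :=
        sum_congr rfl fun i hi => by
          simp only [← mul_assoc, ← sum_mul]
          exact_mod_cast congrArg (fun m : ℕ => (m : R) * x ^ (n - i))
            (sum_choose_sq_mul_choose_sub (mem_range_succ_iff.mp hi)).symm
    _ = ∑ k ∈ range (n + 1), (n.choose k : R) ^ 2 * (1 + x) ^ k := by
        rw [sum_comm]
        exact sum_congr rfl fun k hk => by
          rw [one_add_pow_eq_sum_choose_sub x (mem_range_succ_iff.mp hk), mul_sum]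

end Binomial

section Denominator

variable {t : ℝ}

lemma one_add_sqrt_pow_le_mul_Blog (ht : -1 ≤ t) (n : ℕ) :
    (1 + √(1 + t)) ^ (2 * n) ≤ (n + 1) * Blog t n := by
  have hy : √(1 + t) ^ 2 = 1 + t := Real.sq_sqrt (by linarith)
  calc (1 + √(1 + t)) ^ (2 * n)
      = (∑ k ∈ range (n + 1), (n.choose k : ℝ) * √(1 + t) ^ k) ^ 2 := by
        rw [pow_mul', add_comm 1 √(1 + t), add_pow]
        simp only [one_pow, mul_one, mul_comm (Nat.cast _)]
    _ ≤ #(range (n + 1)) * ∑ k ∈ range (n + 1), ((n.choose k : ℝ) * √(1 + t) ^ k) ^ 2 :=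
        sq_sum_le_card_mul_sum_sq
    _ = (n + 1) * Blog t n := by
        rw [card_range, Blog, sum_choose_mul_add_choose_mul_pow, Nat.cast_add_one]
        simp only [mul_pow, ← pow_mul', pow_mul _ 2, hy]

lemma Blog_pos (ht : -1 ≤ t) (n : ℕ) : 0 < Blog t n := by
  have h : 0 < (n + 1) * Blog t n :=
    lt_of_lt_of_le (by positivity) (one_add_sqrt_pow_le_mul_Blog ht n)
  exact pos_of_mul_pos_right h (by positivity)

end Denominator

section Remainder

open Polynomial intervalIntegral
open scoped Nat

theorem integral_iterate_derivative_mul {a b : ℝ} {p : ℝ[X]} {g : ℕ → ℝ → ℝ} {n : ℕ}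
    (ha : (X - C a) ^ n ∣ p) (hb : (X - C b) ^ n ∣ p)
    (hg : ∀ j, ∀ x ∈ Set.uIcc a b, HasDerivWithinAt (g j) (g (j + 1) x) (Set.uIcc a b) x) :
    ∫ x in a..b, (derivative^[n] p).eval x * g 0 x =
      (-1) ^ n * ∫ x in a..b, p.eval x * g n x := by
  induction n generalizing g with
  | zero => simp
  | succ n ih =>
    have eval_eq_zero {c : ℝ} (hc : (X - C c) ^ (n + 1) ∣ p) : (derivative^[n] p).eval c = 0 := by
      have h := pow_sub_dvd_iterate_derivative_of_pow_dvd n hc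
      rwa [Nat.add_sub_cancel_left, pow_one, dvd_iff_isRoot] at h
    have parts : ∫ x in a..b, (derivative^[n + 1] p).eval x * g 0 x =
        -∫ x in a..b, (derivative^[n] p).eval x * g 1 x := by
      have h := integral_mul_deriv_eq_deriv_mul_of_hasDerivWithinAt (hg 0)
        (fun x _ => ((derivative^[n] p).hasDerivAt x).hasDerivWithinAt)
        (ContinuousOn.intervalIntegrable fun x hx => (hg 1 x hx).continuousWithinAt)
        (Polynomial.continuous _).continuousOn.intervalIntegrable
      simpa only [Function.iterate_succ_apply', eval_eq_zero ha, eval_eq_zero hb, mul_zero,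
        sub_zero, zero_sub, zero_add, mul_comm] using h
    rw [parts, ih ((pow_dvd_pow _ n.le_succ).trans ha) ((pow_dvd_pow _ n.le_succ).trans hb)
      fun j => hg (j + 1), pow_succ]
    ring

lemma aeval_shiftedLegendre {R : Type*} [CommRing R] (n : ℕ) (x : R) :
    aeval x (shiftedLegendre n) =
      ∑ k ∈ range (n + 1), (n.choose k : R) * ((n + k).choose k : R) * (-x) ^ k := by
  rw [shiftedLegendre, map_sum]
  refine sum_congr rfl fun k _ => ?_
  rw [neg_pow x, ← Nat.choose_symm_add]
  simp only [map_mul, map_pow, map_neg, map_one, map_natCast, aeval_X]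
  ring

lemma factorial_mul_aeval_shiftedLegendre {R : Type*} [CommRing R] (n : ℕ) (x : R) :
    (n ! : R) * aeval x (shiftedLegendre n) =
      (derivative^[n] ((X : R[X]) ^ n * (1 - X) ^ n)).eval x := by
  have h := congrArg (aeval x) (factorial_mul_shiftedLegendre_eq n)
  rw [map_mul, map_natCast] at h
  rw [h, ← eval_map_algebraMap, ← iterate_derivative_map]
  simp

variable {t : ℝ}

lemma one_add_mul_pos (ht : -1 < t) {u : ℝ} (hu : u ∈ Set.Icc (0 : ℝ) 1) : 0 < 1 + t * u := by
  nlinarith [mul_nonneg hu.1 (by linarith : 0 ≤ 1 + t), hu.2]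

lemma hasDerivAt_factorial_div_one_add_mul_pow (j : ℕ) {u : ℝ} (hu : 1 + t * u ≠ 0) :
    HasDerivAt (fun u => (-t) ^ j * j ! / (1 + t * u) ^ (j + 1))
      ((-t) ^ (j + 1) * (j + 1)! / (1 + t * u) ^ (j + 2)) u := by
  have h := ((hasDerivAt_const_mul t (x := u)).const_add 1).fun_pow (j + 1)
  refine ((hasDerivAt_const u ((-t) ^ j * (j ! : ℝ))).div h (pow_ne_zero _ hu)).congr_deriv ?_
  rw [Nat.factorial_succ]
  push_cast
  field_simp
  ring

/-- The integral `Iₙ(t)` through which the remainder is expressed: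
`Bₙ(t) log(1 + t) - Aₙ(t) = t²ⁿ⁺¹ Iₙ(t)`. It is meant for `t > -1`, where `1 + tu` does not vanish
on `[0, 1]`. -/
noncomputable def logRemainderIntegral (t : ℝ) (n : ℕ) : ℝ :=
  ∫ u in (0 : ℝ)..1, (u * (1 - u)) ^ n / (1 + t * u) ^ (n + 1)

theorem integral_shiftedLegendre_div (ht : -1 < t) (n : ℕ) :
    ∫ u in (0 : ℝ)..1, aeval u (shiftedLegendre n) / (1 + t * u) =
      t ^ n * logRemainderIntegral t n := by
  have parts := integral_iterate_derivative_mul (a := 0) (b := 1) (n := n)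
    (p := (X : ℝ[X]) ^ n * (1 - X) ^ n)
    (g := fun j u => (-t) ^ j * j ! / (1 + t * u) ^ (j + 1))
    (by simp)
    (dvd_mul_of_dvd_right (pow_dvd_pow_of_dvd ⟨-1, by simp⟩ n) _)
    (fun j u hu => (hasDerivAt_factorial_div_one_add_mul_pow j
      (one_add_mul_pos ht (by rwa [Set.uIcc_of_le zero_le_one] at hu)).ne').hasDerivWithinAt)
  refine mul_left_cancel₀ (Nat.cast_ne_zero.mpr n.factorial_ne_zero : (n ! : ℝ) ≠ 0) ?_
  calc (n ! : ℝ) * ∫ u in (0 : ℝ)..1, aeval u (shiftedLegendre n) / (1 + t * u)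
      = ∫ u in (0 : ℝ)..1, (derivative^[n] ((X : ℝ[X]) ^ n * (1 - X) ^ n)).eval u *
          ((-t) ^ 0 * 0! / (1 + t * u) ^ (0 + 1)) := by
        simp [← factorial_mul_aeval_shiftedLegendre, mul_assoc, div_eq_mul_inv]
    _ = (-1) ^ n * ∫ u in (0 : ℝ)..1, ((X : ℝ[X]) ^ n * (1 - X) ^ n).eval u *
          ((-t) ^ n * n ! / (1 + t * u) ^ (n + 1)) := parts
    _ = (-1) ^ n * ∫ u in (0 : ℝ)..1, ((-t) ^ n * n !) *
          ((u * (1 - u)) ^ n / (1 + t * u) ^ (n + 1)) := by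
        congr 1
        refine integral_congr fun u _ => ?_
        simp only [eval_mul, eval_pow, eval_sub, eval_X, eval_one, mul_pow]
        ring
    _ = n ! * (t ^ n * logRemainderIntegral t n) := by
        have hsign : (-1) ^ n * (-t) ^ n = t ^ n := by rw [← mul_pow, neg_one_mul, neg_neg]
        rw [integral_const_mul, ← logRemainderIntegral, ← hsign]
        ring

lemma clog_zero_left (k : ℕ) : clog 0 k = 0 :=
  sum_eq_zero fun m hm => by
    rw [zero_pow (Nat.one_le_iff_ne_zero.mp (mem_Icc.mp hm).1), mul_zero, zero_div]

lemma hasDerivAt_clog (k : ℕ) (x : ℝ) :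
    HasDerivAt (fun x => clog x k) (∑ m ∈ range k, (-x) ^ m) x := by
  unfold clog
  refine (HasDerivAt.fun_sum fun m _ => ((hasDerivAt_pow m x).const_mul _).div_const _).congr_deriv
    ?_
  rw [← Ico_add_one_right_eq_Icc, sum_Ico_eq_sum_range]
  refine sum_congr (by simp) fun m _ => ?_
  rw [neg_pow x, Nat.add_sub_cancel_left]
  field_simp

lemma intervalIntegrable_div_one_add_mul_pow (ht : -1 < t) {f : ℝ → ℝ} (hf : Continuous f)
    (m : ℕ) :
    IntervalIntegrable (fun u => f u / (1 + t * u) ^ m) MeasureTheory.volume 0 1 := by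
  refine ContinuousOn.intervalIntegrable (hf.continuousOn.div (by fun_prop) fun u hu => ?_)
  rw [Set.uIcc_of_le zero_le_one] at hu
  exact pow_ne_zero _ (one_add_mul_pos ht hu).ne'

lemma log_one_add_sub_clog_eq_integral (ht : -1 < t) (k : ℕ) :
    Real.log (1 + t) - clog t k = ∫ u in (0 : ℝ)..1, t * (-(t * u)) ^ k / (1 + t * u) := by
  have hderiv : ∀ u ∈ Set.uIcc (0 : ℝ) 1,
      HasDerivAt (fun u => Real.log (1 + t * u) - clog (t * u) k)
        (t * (-(t * u)) ^ k / (1 + t * u)) u := by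
    intro u hu
    rw [Set.uIcc_of_le zero_le_one] at hu
    have hpos : 0 < 1 + t * u := one_add_mul_pos ht hu
    have hlin : HasDerivAt (fun u => t * u) t u := hasDerivAt_const_mul t
    refine (((hlin.const_add 1).log hpos.ne').sub
      ((hasDerivAt_clog k (t * u)).comp u hlin)).congr_deriv ?_
    have geom : (∑ m ∈ range k, (-(t * u)) ^ m) * (1 + t * u) = 1 - (-(t * u)) ^ k := by
      linear_combination -geom_sum_mul (-(t * u)) k
    field_simp
    linear_combination -t * geom
  have hint := intervalIntegrable_div_one_add_mul_pow ht
    (f := fun u => t * (-(t * u)) ^ k) (by fun_prop) 1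
  simp only [pow_one] at hint
  rw [integral_eq_sub_of_hasDerivAt hderiv hint]
  simp [clog_zero_left]

theorem Blog_mul_log_sub_Alog_eq_mul_logRemainderIntegral (ht : -1 < t) (n : ℕ) :
    Blog t n * Real.log (1 + t) - Alog t n =
      t ^ (2 * n + 1) * logRemainderIntegral t n := by
  calc Blog t n * Real.log (1 + t) - Alog t n
      = ∑ k ∈ range (n + 1), (n.choose k : ℝ) * ((n + k).choose k : ℝ) * t ^ (n - k) *
          (Real.log (1 + t) - clog t k) := by
        simp only [Blog, Alog, sum_mul, mul_sub, sum_sub_distrib]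
    _ = ∫ u in (0 : ℝ)..1, ∑ k ∈ range (n + 1),
          (n.choose k : ℝ) * ((n + k).choose k : ℝ) * t ^ (n - k) *
            (t * (-(t * u)) ^ k / (1 + t * u)) := by
        rw [integral_finsetSum fun k _ => IntervalIntegrable.const_mul (by
          simpa using intervalIntegrable_div_one_add_mul_pow ht
            (f := fun u => t * (-(t * u)) ^ k) (by fun_prop) 1) _]
        simp only [log_one_add_sub_clog_eq_integral ht, integral_const_mul]
    _ = ∫ u in (0 : ℝ)..1, t ^ (n + 1) * (aeval u (shiftedLegendre n) / (1 + t * u)) := by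
        refine integral_congr fun u _ => ?_
        simp only [aeval_shiftedLegendre, sum_div, mul_sum]
        refine sum_congr rfl fun k hk => ?_
        have h : t ^ (n - k) * t ^ k = t ^ n := pow_sub_mul_pow t (mem_range_succ_iff.mp hk)
        rw [← mul_neg, mul_pow, pow_succ, ← h]
        ring
    _ = t ^ (2 * n + 1) * logRemainderIntegral t n := by
        rw [integral_const_mul, integral_shiftedLegendre_div ht]
        ring

lemma mul_one_sub_mul_one_add_sq_le (u y : ℝ) :
    u * (1 - u) * (1 + y) ^ 2 ≤ 1 + (y ^ 2 - 1) * u := by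
  linarith [sq_nonneg (1 - (1 + y) * u)]

lemma div_one_add_mul_pow_succ_le (ht : -1 < t) (n : ℕ) {u : ℝ} (hu : u ∈ Set.Icc (0 : ℝ) 1) :
    (1 + √(1 + t)) ^ (2 * n) * ((u * (1 - u)) ^ n / (1 + t * u) ^ (n + 1)) ≤ 1 / (1 + t * u) := by
  have hpos : 0 < 1 + t * u := one_add_mul_pos ht hu
  have hu' : 0 ≤ u * (1 - u) := mul_nonneg hu.1 (sub_nonneg.mpr hu.2)
  have hmax : u * (1 - u) * (1 + √(1 + t)) ^ 2 ≤ 1 + t * u := by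
    simpa [Real.sq_sqrt (by linarith : 0 ≤ 1 + t)] using
      mul_one_sub_mul_one_add_sq_le u √(1 + t)
  calc (1 + √(1 + t)) ^ (2 * n) * ((u * (1 - u)) ^ n / (1 + t * u) ^ (n + 1))
      = (u * (1 - u) * (1 + √(1 + t)) ^ 2) ^ n / (1 + t * u) ^ (n + 1) := by
        rw [mul_pow _ ((1 + √(1 + t)) ^ 2), ← pow_mul]
        ring
    _ ≤ (1 + t * u) ^ n / (1 + t * u) ^ (n + 1) := by gcongr
    _ = 1 / (1 + t * u) := by rw [pow_succ, ← div_div, div_self (pow_ne_zero n hpos.ne')]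

lemma logRemainderIntegral_nonneg (ht : -1 < t) (n : ℕ) : 0 ≤ logRemainderIntegral t n :=
  integral_nonneg zero_le_one fun _ hu =>
    div_nonneg (pow_nonneg (mul_nonneg hu.1 (sub_nonneg.mpr hu.2)) n)
      (pow_nonneg (one_add_mul_pos ht hu).le _)

lemma one_add_sqrt_pow_mul_logRemainderIntegral_le (ht : -1 < t) (n : ℕ) :
    (1 + √(1 + t)) ^ (2 * n) * logRemainderIntegral t n ≤ logRemainderIntegral t 0 := by
  unfold logRemainderIntegral
  rw [← integral_const_mul]
  refine integral_mono_on zero_le_one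
    ((intervalIntegrable_div_one_add_mul_pow ht (by fun_prop) _).const_mul _)
    (intervalIntegrable_div_one_add_mul_pow ht (by fun_prop) _) fun u hu => ?_
  simpa only [pow_zero, zero_add, pow_one] using div_one_add_mul_pow_succ_le ht n hu

lemma log_one_add_eq_mul_logRemainderIntegral_zero (ht : -1 < t) :
    Real.log (1 + t) = t * logRemainderIntegral t 0 := by
  simpa [Alog, Blog, clog] using Blog_mul_log_sub_Alog_eq_mul_logRemainderIntegral ht 0

theorem abs_Blog_mul_log_sub_Alog_le (ht : -1 < t) (n : ℕ) :
    |Blog t n * Real.log (1 + t) - Alog t n| ≤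
      (√(1 + t) - 1) ^ (2 * n) * |Real.log (1 + t)| := by
  have ht_eq : t = (√(1 + t) - 1) * (1 + √(1 + t)) := by
    linarith [Real.sq_sqrt (by linarith : 0 ≤ 1 + t)]
  have even_pow_nonneg (x : ℝ) : 0 ≤ x ^ (2 * n) := (even_two_mul n).pow_nonneg x
  calc |Blog t n * Real.log (1 + t) - Alog t n|
      = |t| * (t ^ (2 * n) * logRemainderIntegral t n) := by
        rw [Blog_mul_log_sub_Alog_eq_mul_logRemainderIntegral ht, pow_succ', mul_assoc, abs_mul,
          abs_of_nonneg (mul_nonneg (even_pow_nonneg t) (logRemainderIntegral_nonneg ht n))]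
    _ = |t| * ((√(1 + t) - 1) ^ (2 * n) *
          ((1 + √(1 + t)) ^ (2 * n) * logRemainderIntegral t n)) := by
        rw [← mul_assoc (_ ^ _), ← mul_pow, ← ht_eq]
    _ ≤ |t| * ((√(1 + t) - 1) ^ (2 * n) * logRemainderIntegral t 0) := by
        gcongr
        · exact even_pow_nonneg _
        · exact one_add_sqrt_pow_mul_logRemainderIntegral_le ht n
    _ = (√(1 + t) - 1) ^ (2 * n) * |Real.log (1 + t)| := by
        rw [log_one_add_eq_mul_logRemainderIntegral_zero ht, abs_mul,
          abs_of_nonneg (logRemainderIntegral_nonneg ht 0)]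
        ring

end Remainder

theorem abs_Alog_div_Blog_sub_log_le {t : ℝ} (ht : -1 < t) (n : ℕ) :
    |Alog t n / Blog t n - Real.log (1 + t)| ≤
      (n + 1) * ((√(1 + t) - 1) / (1 + √(1 + t))) ^ (2 * n) * |Real.log (1 + t)| := by
  have hB : 0 < Blog t n := Blog_pos ht.le n
  calc |Alog t n / Blog t n - Real.log (1 + t)|
      = |Blog t n * Real.log (1 + t) - Alog t n| / Blog t n := by
        rw [abs_sub_comm, ← abs_of_pos hB, ← abs_div, abs_of_pos hB, sub_div,
          mul_div_cancel_left₀ _ hB.ne']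
    _ ≤ (√(1 + t) - 1) ^ (2 * n) * |Real.log (1 + t)| / Blog t n := by
        gcongr
        exact abs_Blog_mul_log_sub_Alog_le ht n
    _ ≤ (√(1 + t) - 1) ^ (2 * n) * |Real.log (1 + t)| / ((1 + √(1 + t)) ^ (2 * n) / (n + 1)) := by
        gcongr
        · exact mul_nonneg ((even_two_mul n).pow_nonneg _) (abs_nonneg _)
        · exact div_le_of_le_mul₀ (by positivity) hB.le
            ((one_add_sqrt_pow_le_mul_Blog ht.le n).trans_eq (mul_comm _ _))
    _ = (n + 1) * ((√(1 + t) - 1) / (1 + √(1 + t))) ^ (2 * n) * |Real.log (1 + t)| := by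
        rw [div_pow]
        field_simp

lemma tendsto_add_one_mul_pow_two_mul {r : ℝ} (hr : |r| < 1) :
    Tendsto (fun n : ℕ => ((n : ℝ) + 1) * r ^ (2 * n)) atTop (nhds 0) := by
  have hr2 : |r ^ 2| < 1 := by
    rw [abs_pow]
    exact pow_lt_one₀ (abs_nonneg r) hr two_ne_zero
  simpa [pow_mul, add_mul] using (tendsto_self_mul_const_pow_of_abs_lt_one hr2).add
    (tendsto_pow_atTop_nhds_zero_of_abs_lt_one hr2)

theorem Alog_div_Blog_tendsto_log_general (t : ℝ) (ht : -1 < t) :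
    (∀ n, Blog t n ≠ 0) ∧
    Tendsto (fun n : ℕ => Alog t n / Blog t n) atTop (nhds (Real.log (1 + t))) := by
  refine ⟨fun n => (Blog_pos ht.le n).ne', ?_⟩
  have hy : 0 < √(1 + t) := Real.sqrt_pos.mpr (by linarith)
  have ratio_lt_one : |(√(1 + t) - 1) / (1 + √(1 + t))| < 1 := by
    rw [abs_div, abs_of_pos (by linarith : 0 < 1 + √(1 + t)), div_lt_one (by linarith), abs_lt]
    constructor <;> linarith
  rw [tendsto_iff_norm_sub_tendsto_zero]
  refine squeeze_zero (fun n => norm_nonneg _) (fun n => abs_Alog_div_Blog_sub_log_le ht n) ?_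
  simpa using (tendsto_add_one_mul_pow_two_mul ratio_lt_one).mul_const |Real.log (1 + t)|

/-- **Convergence of `Aₙ(t)/Bₙ(t)` to `log(1+t)`.**
For `−1 < t ≤ 1`, the sequence `Aₙ(t)/Bₙ(t)` tends to `log(1+t)`; in particular
`Bₙ(t) ≠ 0` for all sufficiently large `n`. -/
theorem Alog_div_Blog_tendsto_log (t : ℝ) (ht₁ : -1 < t) (ht₂ : t ≤ 1) :
    (∀ᶠ n in atTop, Blog t n ≠ 0) ∧
    Tendsto (fun n : ℕ => Alog t n / Blog t n) atTop (nhds (Real.log (1 + t))) := by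
  have h := Alog_div_Blog_tendsto_log_general t ht₁
  exact ⟨.of_forall h.1, h.2⟩
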